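/- Let λ be an infinite cardinal. Then 2^λ < 2^{λ⁺} if and only if the weak diamond Φ²_{λ⁺}(λ⁺) holds. -/

import Mathlib

universe u

open Cardinal

namespace WD

/-- `C` is closed and unbounded in the ordinal `Λ`. -/
def ClubIn (C : Set Ordinal.{u}) (Λ : Ordinal.{u}) : Prop :=
  (∀ x ∈ C, x < Λ) ∧
  (∀ α < Λ, ∃ β ∈ C, α ≤ β) ∧
  (∀ S : Set Ordinal.{u}, S ⊆ C → S.Nonempty → BddAbove S → sSup S < Λ → sSup S ∈ C)

/-- `S` is stationary in the ordinal `Λ`: it meets every club of `Λ`. -/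
def StatIn (S : Set Ordinal.{u}) (Λ : Ordinal.{u}) : Prop :=
  ∀ C : Set Ordinal.{u}, ClubIn C Λ → (S ∩ C).Nonempty

/-- The ordinals below `λ⁺`. -/
def Tower (lam : Cardinal.{u}) : Type (u + 1) :=
  {α : Ordinal.{u} // α < (Order.succ lam).ord}

/-- A set of size `2^λ` (realized as the ordinals below `(2^λ).ord`). -/
def Target (lam : Cardinal.{u}) : Type (u + 1) :=
  {β : Ordinal.{u} // β < ((2 : Cardinal.{u}) ^ lam).ord}

/-- The elements of `^{<λ⁺}(2^λ)`: functions from a proper initial segment of `λ⁺`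
into `2^λ`. -/
def PSeq (lam : Cardinal.{u}) : Type (u + 1) :=
  (α : Tower lam) × ({β : Ordinal.{u} // β < α.1} → Target lam)

/-- The restriction `f ↾ α` of `f : λ⁺ → 2^λ` to `α < λ⁺`. -/
def restr (lam : Cardinal.{u}) (f : Tower lam → Target lam) (α : Tower lam) : PSeq lam :=
  ⟨α, fun β => f ⟨β.1, β.2.trans α.2⟩⟩

/-- The weak diamond principle `Φ^k_{λ⁺}(S)` of Devlin–Shelah: for every
`F : ^{<λ⁺}(2^λ) → k` there is `g : λ⁺ → k` such that for every `f : λ⁺ → 2^λ` the set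
`{α ∈ S : F(f ↾ α) = g(α)}` is stationary in `λ⁺`. -/
def WeakDiamond (lam : Cardinal.{u}) (k : ℕ) (S : Set Ordinal.{u}) : Prop :=
  ∀ F : PSeq lam → Fin k, ∃ g : Tower lam → Fin k,
    ∀ f : Tower lam → Target lam,
      StatIn {α : Ordinal.{u} | ∃ hα : α < (Order.succ lam).ord,
          α ∈ S ∧ F (restr lam f ⟨α, hα⟩) = g ⟨α, hα⟩}
        (Order.succ lam).ord

end WD

namespace WD

section clubs
variable {lam : Cardinal.{u}}

lemma succ_lt (hinf : ℵ₀ ≤ lam) {a : Ordinal.{u}} (ha : a < (Order.succ lam).ord) :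
    Order.succ a < (Order.succ lam).ord :=
  (isSuccLimit_ord (hinf.trans (Order.le_succ lam))).succ_lt ha

lemma iSup_lt_kappa (hinf : ℵ₀ ≤ lam) {I : Type u} (hI : #I ≤ lam) (f : I → Ordinal.{u})
    (hf : ∀ i, f i < (Order.succ lam).ord) : iSup f < (Order.succ lam).ord := by
  apply Ordinal.iSup_lt_of_lt_cof _ hf
  rw [(isRegular_succ hinf).cof_ord]
  exact Order.lt_succ_iff.2 hI

lemma iSup_nat_lt_kappa (hinf : ℵ₀ ≤ lam) (f : ℕ → Ordinal.{u})
    (hf : ∀ i, f i < (Order.succ lam).ord) : iSup f < (Order.succ lam).ord := by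
  apply Ordinal.lift_iSup_lt_of_lt_cof _ hf
  rw [← Ordinal.lift_cof, (isRegular_succ hinf).cof_ord]
  simpa using hinf

/-- next element -/
noncomputable def nxt (D : Set Ordinal.{u}) (a : Ordinal.{u}) : Ordinal.{u} :=
  sInf {b | b ∈ D ∧ a < b}

lemma nxt_spec (hinf : ℵ₀ ≤ lam) {D : Set Ordinal.{u}} (hD : ClubIn D (Order.succ lam).ord)
    {a : Ordinal.{u}} (ha : a < (Order.succ lam).ord) : nxt D a ∈ D ∧ a < nxt D a := by
  obtain ⟨b, hb, hab⟩ := hD.2.1 _ (succ_lt hinf ha)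
  exact csInf_mem (s := {b | b ∈ D ∧ a < b}) ⟨b, hb, Order.succ_le_iff.1 hab⟩

lemma club_iInter (hinf : ℵ₀ ≤ lam) {I : Type u} [Nonempty I] (hI : #I ≤ lam)
    (C : I → Set Ordinal.{u}) (hC : ∀ i, ClubIn (C i) (Order.succ lam).ord) :
    ClubIn (⋂ i, C i) (Order.succ lam).ord := by
  refine ⟨?_, ?_, ?_⟩
  · intro x hx
    exact (hC (Classical.arbitrary I)).1 x (Set.mem_iInter.1 hx _)
  · intro a ha
    let H : Ordinal.{u} → Ordinal.{u} := fun b => ⨆ i, nxt (C i) b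
    have hH : ∀ b < (Order.succ lam).ord, H b < (Order.succ lam).ord := fun b hb =>
      iSup_lt_kappa hinf hI _ fun i => (hC i).1 _ (nxt_spec hinf (hC i) hb).1
    let s : ℕ → Ordinal.{u} := fun n => H^[n] a
    have hs : ∀ n, s n < (Order.succ lam).ord := by
      intro n
      induction n with
      | zero => exact ha
      | succ n ih => 
        simp only [s, Function.iterate_succ_apply'] 
        exact hH _ ih
    have hle : ∀ i n, nxt (C i) (s n) ≤ s (n+1) := by
      intro i n
      simp only [s, Function.iterate_succ_apply']
      exact Ordinal.le_iSup (fun i => nxt (C i) (H^[n] a)) i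
    have hsup := iSup_nat_lt_kappa hinf s hs
    refine ⟨iSup s, Set.mem_iInter.2 fun i => ?_, Ordinal.le_iSup s 0⟩
    have e : iSup s = sSup (Set.range fun n => nxt (C i) (s n)) := by
      apply le_antisymm
      · refine Ordinal.iSup_le fun n => ?_
        exact (nxt_spec hinf (hC i) (hs n)).2.le.trans
          (Ordinal.le_iSup (fun n => nxt (C i) (s n)) n)
      · refine Ordinal.iSup_le fun n => ?_
        exact (hle i n).trans (Ordinal.le_iSup s (n+1))
    rw [e]
    apply (hC i).2.2
    · rintro _ ⟨n, rfl⟩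
      exact (nxt_spec hinf (hC i) (hs n)).1
    · exact Set.range_nonempty _
    · exact Ordinal.bddAbove_of_small
    · rw [← e]; exact hsup
  · intro S hS hne hb hlt
    exact Set.mem_iInter.2 fun i =>
      (hC i).2.2 S (fun x hx => Set.mem_iInter.1 (hS hx) i) hne hb hlt

lemma club_univ : ClubIn (Set.Iio (Order.succ lam).ord) (Order.succ lam).ord :=
  ⟨fun _ h => h, fun a ha => ⟨a, ha, le_rfl⟩, fun _ _ _ _ h => h⟩

lemma club_pos (hinf : ℵ₀ ≤ lam) :
    ClubIn {a | 0 < a ∧ a < (Order.succ lam).ord} (Order.succ lam).ord := by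
  refine ⟨fun _ h => h.2, fun a ha => ⟨Order.succ a, ⟨?_, succ_lt hinf ha⟩, Order.le_succ a⟩, ?_⟩
  · exact (zero_le (a := a)).trans_lt (Order.lt_succ a)
  · rintro S hS ⟨x, hx⟩ hb hlt
    exact ⟨(hS hx).1.trans_le (le_csSup hb hx), hlt⟩

end clubs

section cards
variable (lam : Cardinal.{u})

lemma mk_tower : #(Tower lam) = lift.{u+1} (Order.succ lam) := by
  have := Cardinal.mk_Iio_ordinal (Order.succ lam).ord
  rw [card_ord] at this
  exact this

lemma mk_target : #(Target lam) = lift.{u+1} (2 ^ lam) := by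
  have := Cardinal.mk_Iio_ordinal ((2 : Cardinal.{u}) ^ lam).ord
  rw [card_ord] at this
  exact this

variable {lam}

lemma pow_pow (hinf : ℵ₀ ≤ lam) {c : Cardinal.{u}} (hc : c ≤ lam) (h0 : c ≠ 0) : 
    ((2 : Cardinal.{u}) ^ lam) ^ c = 2 ^ lam := by
  rw [← power_mul, mul_eq_left hinf hc h0]

lemma pow_pow_le (hinf : ℵ₀ ≤ lam) {c : Cardinal.{u}} (hc : c ≤ lam) : 
    ((2 : Cardinal.{u}) ^ lam) ^ c ≤ 2 ^ lam := by
  rw [← power_mul]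
  exact power_le_power_left two_ne_zero ((mul_le_max_of_aleph0_le_left hinf).trans
    (max_le le_rfl hc))

lemma mk_pseq_le (hinf : ℵ₀ ≤ lam) : #(PSeq lam) ≤ lift.{u+1} (2 ^ lam) := by
  have h1 : ∀ α : Tower lam, #({β : Ordinal.{u} // β < α.1} → Target lam) ≤
      lift.{u+1} (2 ^ lam) := by
    intro α
    have h2 : #{β : Ordinal.{u} // β < α.1} = lift.{u+1} α.1.card := mk_Iio_ordinal α.1
    have h3 : α.1.card ≤ lam := Order.lt_succ_iff.1 (lt_ord.1 α.2)
    rw [← power_def, h2, mk_target, ← lift_power]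
    exact lift_le.2 (pow_pow_le hinf h3)
  have hc : ℵ₀ ≤ lift.{u+1} ((2 : Cardinal.{u}) ^ lam) := by
    exact aleph0_le_lift.2 (hinf.trans (cantor lam).le)
  calc #(PSeq lam) = sum fun α : Tower lam => #({β : Ordinal.{u} // β < α.1} → Target lam) :=
        mk_sigma _
    _ ≤ sum fun α : Tower lam => lift.{u+1} ((2 : Cardinal.{u}) ^ lam) := sum_le_sum _ _ h1
    _ = #(Tower lam) * lift.{u+1} (2 ^ lam) := sum_const' _ _
    _ ≤ lift.{u+1} (2 ^ lam) * lift.{u+1} (2 ^ lam) := by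
        gcongr
        rw [mk_tower]
        exact lift_le.2 (Order.succ_le_of_lt (cantor lam))
    _ = _ := mul_eq_self hc

end cards

lemma restr_eq_iff {lam : Cardinal.{u}} (f f' : Tower lam → Target lam) (a a' : Tower lam) :
    restr lam f a = restr lam f' a' ↔ a = a' ∧ ∀ b : Tower lam, b.1 < a.1 → f b = f' b := by
  constructor
  · intro h
    have h1 : a = a' := congrArg Sigma.fst h
    subst h1
    refine ⟨rfl, fun b hb => ?_⟩
    have h2 := eq_of_heq (Sigma.mk.inj h).2
    exact congrFun h2 ⟨b.1, hb⟩
  · rintro ⟨rfl, h⟩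
    unfold restr
    congr 1
    funext b
    exact h _ b.2

lemma restr_congr {lam : Cardinal.{u}} {f f' : Tower lam → Target lam} {a : Tower lam}
    (h : ∀ b : Tower lam, b.1 < a.1 → f b = f' b) : restr lam f a = restr lam f' a :=
  (restr_eq_iff _ _ _ _).2 ⟨rfl, h⟩

/-- The one-step relation. -/
def Step (lam : Cardinal.{u}) (p : Target lam → Target lam) (G : PSeq lam → PSeq lam)
    (x y : (Tower lam → Target lam) × Set Ordinal.{u}) : Prop :=
  (∀ b, x.1 b = p (y.1 b)) ∧ y.2 ⊆ x.2 ∧ ClubIn y.2 (Order.succ lam).ord ∧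
  ∀ (a : Tower lam), a.1 ∈ y.2 → ∃ h : nxt x.2 a.1 < (Order.succ lam).ord,
    G (restr lam y.1 a) = restr lam x.1 ⟨nxt x.2 a.1, h⟩

lemma step_exists {lam : Cardinal.{u}} (hinf : ℵ₀ ≤ lam) (F : PSeq lam → Fin 2)
    (hF : ∀ g : Tower lam → Fin 2, ∃ (f : Tower lam → Target lam) (C : Set Ordinal.{u}),
      ClubIn C (Order.succ lam).ord ∧ ∀ a : Tower lam, a.1 ∈ C → F (restr lam f a) = g a) :
    ∃ (p : Target lam → Target lam) (G : PSeq lam → PSeq lam),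
      ∀ x : (Tower lam → Target lam) × Set Ordinal.{u}, ClubIn x.2 (Order.succ lam).ord →
        ∃ y, Step lam p G x y := by
  classical
  obtain ⟨I, hI⟩ : ∃ I : Type u, #I = lam := ⟨lam.out, mk_out lam⟩
  obtain ⟨c⟩ : Nonempty (PSeq lam ↪ (I → Fin 2)) := by
    rw [← lift_mk_le']
    have := mk_pseq_le hinf
    have e1 : lift.{u} #(PSeq lam) = #(PSeq lam) := lift_id'.{u, u+1} _
    rw [e1]
    simpa [hI] using this
  have hOI : #(Option I) = lam := by
    rw [mk_option, hI, add_one_eq hinf]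
  obtain ⟨e⟩ : Nonempty ((Option I → Target lam) ↪ Target lam) := by
    rw [← le_def]
    have h : #(Option I → Target lam) = lift.{u+1} ((2 ^ lam) ^ lam) := by
      rw [mk_arrow, mk_target, hOI, lift_power]; simp
    rw [h, mk_target]
    exact lift_le.2 (pow_pow_le hinf le_rfl)
  have hne : Nonempty (Target lam) := by
    rw [← mk_ne_zero_iff, mk_target, Ne, lift_eq_zero]
    exact (power_pos lam two_pos).ne'
  have hneP : Nonempty (PSeq lam) := by
    obtain ⟨f, C, hC, -⟩ := hF (fun _ => 0)
    obtain ⟨b, hb, -⟩ := hC.2.1 0 ((isRegular_succ hinf).ord_pos)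
    exact ⟨restr lam f ⟨b, hC.1 b hb⟩⟩
  let d : Target lam → Option I → Target lam := Function.invFun e
  have hd : ∀ v, d (e v) = v := Function.leftInverse_invFun e.injective
  let c' : (I → Fin 2) → PSeq lam := Function.invFun c
  have hc' : ∀ v, c' (c v) = v := Function.leftInverse_invFun c.injective
  refine ⟨fun t => d t none, fun s => c' fun i => F ⟨s.1, fun b => d (s.2 b) (some i)⟩, ?_⟩
  rintro ⟨f, D⟩ hD
  simp only at hD
  have hn : ∀ a : Tower lam, nxt D a.1 < (Order.succ lam).ord := fun a =>
    hD.1 _ (nxt_spec hinf hD a.2).1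
  let g : Tower lam → PSeq lam := fun a => restr lam f ⟨nxt D a.1, hn a⟩
  choose fi Ci hCi hfi using fun i : I => hF (fun a => c (g a) i)
  let y : Tower lam → Target lam := fun a => e fun o => o.elim (f a) fun i => fi i a
  let E : Option I → Set Ordinal.{u} := fun o => o.elim D Ci
  refine ⟨(y, ⋂ o, E o), ?_, ?_, ?_, ?_⟩
  · intro b
    simp [y, hd]
  · intro z hz
    exact Set.mem_iInter.1 hz none
  · apply club_iInter hinf hOI.le
    rintro (_ | i)
    · exact hD
    · exact hCi i
  · intro a ha
    refine ⟨hn a, ?_⟩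
    change c' _ = g a
    rw [← hc' (g a)]
    congr 1
    funext i
    rw [← hfi i a (Set.mem_iInter.1 ha (some i))]
    congr 1
    unfold restr
    simp [y, hd]
    rfl

lemma iter_p {lam : Cardinal.{u}} {p : Target lam → Target lam} {G : PSeq lam → PSeq lam}
    {s s' : ℕ → (Tower lam → Target lam) × Set Ordinal.{u}}
    (hs : ∀ n, Step lam p G (s n) (s (n+1))) (hs' : ∀ n, Step lam p G (s' n) (s' (n+1)))
    {n m : ℕ} (h : n ≤ m) (b : Tower lam) (hb : (s m).1 b = (s' m).1 b) :
    (s n).1 b = (s' n).1 b := by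
  induction m, h using Nat.le_induction with
  | base => exact hb
  | succ m _ ih =>
    apply ih
    rw [(hs m).1, (hs' m).1, hb]

/-- one side: sup of nexts lies in every club -/
lemma sup_nxt_mem {lam : Cardinal.{u}} (hinf : ℵ₀ ≤ lam) {D : ℕ → Set Ordinal.{u}}
    (hD : ∀ n, ClubIn (D n) (Order.succ lam).ord) (hanti : Antitone D)
    {a : Ordinal.{u}} (ha : a < (Order.succ lam).ord) (n : ℕ) :
    (⨆ m, nxt (D m) a) ∈ D n := by
  have hlt := iSup_nat_lt_kappa hinf (fun m => nxt (D m) a)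
    fun m => (hD m).1 _ (nxt_spec hinf (hD m) ha).1
  have hmono : Monotone fun m => nxt (D m) a := by
    intro i j hij
    have := nxt_spec hinf (hD j) ha
    exact csInf_le' ⟨hanti hij this.1, this.2⟩
  have e : (⨆ m, nxt (D m) a) = sSup (Set.range fun m => nxt (D (n + m)) a) := by
    apply le_antisymm
    · refine Ordinal.iSup_le fun m => ?_
      exact (hmono (Nat.le_add_left m n)).trans
        (Ordinal.le_iSup (fun m => nxt (D (n + m)) a) m)
    · refine Ordinal.iSup_le fun m => ?_
      exact Ordinal.le_iSup (fun m => nxt (D m) a) (n + m)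
  rw [e]
  apply (hD n).2.2
  · rintro _ ⟨m, rfl⟩
    exact hanti (Nat.le_add_right n m) (nxt_spec hinf (hD (n+m)) ha).1
  · exact Set.range_nonempty _
  · exact Ordinal.bddAbove_of_small
  · rw [← e]; exact hlt

lemma key {lam : Cardinal.{u}} (hinf : ℵ₀ ≤ lam) {p : Target lam → Target lam}
    {G : PSeq lam → PSeq lam}
    {s s' : ℕ → (Tower lam → Target lam) × Set Ordinal.{u}}
    (hs : ∀ n, Step lam p G (s n) (s (n+1))) (hs' : ∀ n, Step lam p G (s' n) (s' (n+1)))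
    (hc : ∀ n, ClubIn (s n).2 (Order.succ lam).ord)
    (hc' : ∀ n, ClubIn (s' n).2 (Order.succ lam).ord)
    (a₀ a₀' : Tower lam) (ha₀ : ∀ n, a₀.1 ∈ (s n).2) (ha₀' : ∀ n, a₀'.1 ∈ (s' n).2)
    (heq : ∀ n, restr lam (s n).1 a₀ = restr lam (s' n).1 a₀') :
    (s 0).1 = (s' 0).1 := by
  have hanti : Antitone fun n => (s n).2 := antitone_nat_of_succ_le fun n => (hs n).2.1
  have hanti' : Antitone fun n => (s' n).2 := antitone_nat_of_succ_le fun n => (hs' n).2.1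
  let A : Set Ordinal.{u} := {a | ∀ n, a ∈ (s n).2 ∧ a ∈ (s' n).2 ∧
    ∀ b : Tower lam, b.1 < a → (s n).1 b = (s' n).1 b}
  have hA₀ : a₀.1 ∈ A := by
    intro n
    obtain ⟨h1, h2⟩ := (restr_eq_iff _ _ _ _).1 (heq n)
    exact ⟨ha₀ n, h1 ▸ ha₀' n, h2⟩
  have hlt : ∀ a ∈ A, a < (Order.succ lam).ord := fun a ha => (hc 0).1 a (ha 0).1
  have hnext : ∀ a ∈ A, ∃ a' ∈ A, a < a' := by
    intro a ha
    have hak := hlt a ha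
    have hn : ∀ n, nxt (s n).2 a = nxt (s' n).2 a ∧
        ∀ b : Tower lam, b.1 < nxt (s n).2 a → (s n).1 b = (s' n).1 b := by
      intro n
      obtain ⟨h1, e1⟩ := (hs n).2.2.2 ⟨a, hak⟩ (ha (n+1)).1
      obtain ⟨h2, e2⟩ := (hs' n).2.2.2 ⟨a, hak⟩ (ha (n+1)).2.1
      have e3 : restr lam (s (n+1)).1 ⟨a, hak⟩ = restr lam (s' (n+1)).1 ⟨a, hak⟩ :=
        restr_congr (ha (n+1)).2.2
      rw [e3, e2] at e1
      obtain ⟨h3, h4⟩ := (restr_eq_iff _ _ _ _).1 e1.symm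
      exact ⟨congrArg Subtype.val h3, h4⟩
    refine ⟨⨆ m, nxt (s m).2 a, fun n => ⟨?_, ?_, ?_⟩, ?_⟩
    · exact sup_nxt_mem hinf hc hanti hak n
    · have : (fun m => nxt (s m).2 a) = fun m => nxt (s' m).2 a := funext fun m => (hn m).1
      rw [this]
      exact sup_nxt_mem hinf hc' hanti' hak n
    · intro b hb
      obtain ⟨m, hm⟩ := Ordinal.lt_iSup_iff.1 hb
      have hmono : nxt (s m).2 a ≤ nxt (s (max n m)).2 a := by
        have := nxt_spec hinf (hc (max n m)) hak
        exact csInf_le' ⟨hanti (le_max_right n m) this.1, this.2⟩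
      exact iter_p hs hs' (le_max_left n m) b ((hn _).2 b (hm.trans_le hmono))
    · exact (nxt_spec hinf (hc 0) hak).2.trans_le (Ordinal.le_iSup (fun m => nxt (s m).2 a) 0)
  have hbdd : BddAbove A := ⟨_, fun a ha => (hlt a ha).le⟩
  funext b
  by_contra hb
  have hle : sSup A ≤ b.1 := csSup_le ⟨_, hA₀⟩ fun a ha => by
    by_contra hcon
    exact hb ((ha 0).2.2 b (not_le.1 hcon))
  have hsk := hle.trans_lt b.2
  have hmem : sSup A ∈ A := fun n =>
    ⟨(hc n).2.2 A (fun x hx => (hx n).1) ⟨_, hA₀⟩ hbdd hsk,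
     (hc' n).2.2 A (fun x hx => (hx n).2.1) ⟨_, hA₀⟩ hbdd hsk,
     fun b hb => by
      obtain ⟨a, ha, hba⟩ := (lt_csSup_iff hbdd ⟨_, hA₀⟩).1 hb
      exact (ha n).2.2 b hba⟩
  obtain ⟨a', ha', hlt'⟩ := hnext _ hmem
  exact absurd (le_csSup hbdd ha') (not_le.2 hlt')

lemma card_le {lam : Cardinal.{u}} (hinf : ℵ₀ ≤ lam) (F : PSeq lam → Fin 2)
    (hF : ∀ g : Tower lam → Fin 2, ∃ (f : Tower lam → Target lam) (C : Set Ordinal.{u}),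
      ClubIn C (Order.succ lam).ord ∧ ∀ a : Tower lam, a.1 ∈ C → F (restr lam f a) = g a) :
    (2 : Cardinal.{u}) ^ Order.succ lam ≤ 2 ^ lam := by
  obtain ⟨p, G, hpG⟩ := step_exists hinf F hF
  have hseq : ∀ f : Tower lam → Target lam,
      ∃ (s : ℕ → (Tower lam → Target lam) × Set Ordinal.{u}) (a : Tower lam),
        (s 0).1 = f ∧ (∀ n, Step lam p G (s n) (s (n+1))) ∧
        (∀ n, ClubIn (s n).2 (Order.succ lam).ord) ∧ ∀ n, a.1 ∈ (s n).2 := by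
    intro f
    let St := {x : (Tower lam → Target lam) × Set Ordinal.{u} // ClubIn x.2 (Order.succ lam).ord}
    choose nx hnx using fun x : St => hpG x.1 x.2
    let s : ℕ → St := fun n => Nat.rec ⟨(f, Set.Iio _), club_univ⟩
      (fun _ x => ⟨nx x, (hnx x).2.2.1⟩) n
    have hcl : ClubIn (⋂ n : ULift.{u} ℕ, (s n.down).1.2) (Order.succ lam).ord :=
      club_iInter hinf (by simpa using hinf) _ fun n => (s n.down).2
    obtain ⟨a, ha, -⟩ := hcl.2.1 0 ((isRegular_succ hinf).ord_pos)
    exact ⟨fun n => (s n).1, ⟨a, hcl.1 a ha⟩, rfl, fun n => hnx (s n), fun n => (s n).2,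
      fun n => Set.mem_iInter.1 ha ⟨n⟩⟩
  choose s a h0 hst hcl hmem using hseq
  have hinj : Function.Injective fun (f : Tower lam → Target lam) (n : ℕ) =>
      restr lam (s f n).1 (a f) := by
    intro f f' hff
    rw [← h0 f, ← h0 f']
    exact key hinf (hst f) (hst f') (hcl f) (hcl f') (a f) (a f') (hmem f) (hmem f')
      fun n => congrFun hff n
  have h1 := mk_le_of_injective hinj
  have h2 : #(ℕ → PSeq lam) ≤ lift.{u+1} (2 ^ lam) := by
    calc #(ℕ → PSeq lam) = #(PSeq lam) ^ ℵ₀ := by rw [mk_arrow]; simp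
      _ ≤ (lift.{u+1} (2 ^ lam)) ^ ℵ₀ := power_le_power_right (mk_pseq_le hinf)
      _ = lift.{u+1} ((2 ^ lam) ^ ℵ₀) := by rw [lift_power]; simp
      _ ≤ _ := lift_le.2 (pow_pow_le hinf hinf)
  have h3 : lift.{u+1} ((2 : Cardinal.{u}) ^ Order.succ lam) ≤ #(Tower lam → Target lam) := by
    rw [← power_def, mk_target, mk_tower, ← lift_power]
    exact lift_le.2 (power_le_power_right
      ((cantor lam).le.trans' ((natCast_le_aleph0 (n := 2)).trans hinf)))
  exact lift_le.1 (h3.trans (h1.trans h2))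

end WD

/-- **Devlin–Shelah.** For an infinite cardinal `λ`:
`2^λ < 2^{λ⁺}` iff the weak diamond `Φ²_{λ⁺}(λ⁺)` holds. -/
theorem stmt6 (lam : Cardinal.{u}) (hinf : ℵ₀ ≤ lam) :
    (2 : Cardinal.{u}) ^ lam < 2 ^ Order.succ lam ↔
      WD.WeakDiamond lam 2 (Set.Iio (Order.succ lam).ord) := by
  constructor
  · intro hlt F
    by_contra hcon
    push Not at hcon
    refine absurd hlt (not_lt.2 (WD.card_le hinf F fun g => ?_))
    obtain ⟨f, hf⟩ := hcon (fun a => 1 - g a)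
    unfold WD.StatIn at hf
    push Not at hf
    obtain ⟨C, hC, hCe⟩ := hf
    refine ⟨f, C, hC, fun a ha => ?_⟩
    by_contra hne
    have : a.1 ∈ (∅ : Set Ordinal.{u}) := by
      rw [← hCe]
      refine ⟨⟨a.2, a.2, ?_⟩, ha⟩
      change F (WD.restr lam f a) = 1 - g a
      revert hne
      generalize F (WD.restr lam f a) = x
      generalize g a = y
      revert x y
      decide
    exact this
  · intro hW
    by_contra hcon
    rw [not_lt] at hcon
    obtain ⟨e⟩ : Nonempty ((WD.Tower lam → Fin 2) ↪ WD.Target lam) := by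
      rw [← le_def, WD.mk_target, mk_arrow, WD.mk_tower]
      have := lift_le.{u+1}.2 hcon
      simpa using this
    have hpos : (0 : Ordinal.{u}) < (Order.succ lam).ord := (isRegular_succ hinf).ord_pos
    classical
    let d : WD.Target lam → WD.Tower lam → Fin 2 := Function.invFun e
    have hd : ∀ v, d (e v) = v := Function.leftInverse_invFun e.injective
    obtain ⟨g, hg⟩ := hW fun s => if h : 0 < s.1.1 then d (s.2 ⟨0, h⟩) s.1 else 0
    obtain ⟨a, ⟨ha, -, hag⟩, ha0, -⟩ := hg (fun _ => e fun a => 1 - g a) _ (WD.club_pos hinf)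
    simp only [WD.restr, ha0, dif_pos, hd] at hag
    revert hag
    generalize g ⟨a, ha⟩ = y
    revert y
    decide
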